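/- arXiv:0912.4747 — 2 statements merged into one kernel-verified Lean document; each statement's English description precedes it below -/
import Mathlib

section
/- For n ≥ 3, the number of permutations of length n with exactly one occurrence of the classical pattern 1-2-3 equals the sum over i from 2 to n−1 of (C_{n−i+1} − C_{n−i})(C_i − C_{i−1}), where C_m is the m-th Catalan number. -/
/-- Number of occurrences of the classical pattern 1-2-3 in `π`. -/
def occ123 {n : ℕ} (π : Equiv.Perm (Fin n)) : ℕ :=
  (Finset.univ.filter (fun t : Fin n × Fin n × Fin n =>
    t.1 < t.2.1 ∧ t.2.1 < t.2.2 ∧ π t.1 < π t.2.1 ∧ π t.2.1 < π t.2.2)).card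

/-- Number of occurrences of the vincular pattern 1-23 in `π`. -/
def occ1_23 {n : ℕ} (π : Equiv.Perm (Fin n)) : ℕ :=
  (Finset.univ.filter (fun t : Fin n × Fin n × Fin n =>
    t.1 < t.2.1 ∧ t.2.1 < t.2.2 ∧ (t.2.2 : ℕ) = (t.2.1 : ℕ) + 1 ∧
      π t.1 < π t.2.1 ∧ π t.2.1 < π t.2.2)).card

/-- Number of occurrences of the vincular pattern 12-3 in `π`. -/
def occ12_3 {n : ℕ} (π : Equiv.Perm (Fin n)) : ℕ :=
  (Finset.univ.filter (fun t : Fin n × Fin n × Fin n =>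
    t.1 < t.2.1 ∧ t.2.1 < t.2.2 ∧ (t.2.1 : ℕ) = (t.1 : ℕ) + 1 ∧
      π t.1 < π t.2.1 ∧ π t.2.1 < π t.2.2)).card

/-!
Complementing values, we count the permutations `π` of `Fin n` with exactly one occurrence `i <
p < k` of 3-2-1. Exchanging the entries of `π` at `i` and `k` leaves exactly the values less
than `π p` before `p`, so `p` is a fixed point. Truncating `π` at the value `p` on either side
of the position `p` and completing to permutations yields two 3-2-1-avoiding permutations `l`
and `r` that move `p`, where `l` fixes everything after `p` and `r` fixes everything before `p`.
Conversely, every such pair comes from exactly one `π`, so that there are `(C_(p+1) - C_p) *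
(C_(n-p) - C_(n-p-1))` of them; positions start at `0`, so that the summation index of the
theorem is `p + 1`.

That 3-2-1-avoiding permutations are counted by Catalan numbers follows by removing the last
entry `a`: what remains is an arbitrary 3-2-1-avoiding permutation whose values `≥ a` increase.
Counting those with a general threshold instead of `a` leads to the recursion of the ballot
numbers.
-/

open Equiv OrderDual

lemma ncard_iUnion_eq_sum {ι α : Type*} [Fintype ι] [Finite α] {s : ι → Set α}
    (hs : Pairwise (Function.onFun Disjoint s)) : (⋃ i, s i).ncard = ∑ i, (s i).ncard := by
  rw [Set.ncard_iUnion_of_finite (fun i ↦ (s i).toFinite) hs, finsum_eq_sum_of_fintype]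

lemma ncard_preimage_equiv {α β : Type*} (e : α ≃ β) (s : Set β) : (e ⁻¹' s).ncard = s.ncard :=
  Set.ncard_preimage_of_injective_subset_range e.injective (by simp [e.range_eq_univ])

/-- The permutation `π` seen as a permutation of the order dual. -/
def dualPerm {α : Type*} (π : Perm α) : Perm αᵒᵈ :=
  toDual.permCongr π

@[simp]
lemma dualPerm_toDual {α : Type*} (π : Perm α) (x : α) : dualPerm π (toDual x) = toDual (π x) :=
  rfl

@[simp]
lemma dualPerm_symm_toDual {α : Type*} (π : Perm α) (x : α) :
    (dualPerm π).symm (toDual x) = toDual (π.symm x) :=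
  rfl

section Gluing

variable {α : Type*} [LinearOrder α]

/-- The positions `x < y < z` carry an occurrence of the classical pattern 3-2-1 in `π`. -/
def IsOcc321 (π : Perm α) (x y z : α) : Prop :=
  x < y ∧ y < z ∧ π z < π y ∧ π y < π x

/-- The position `y` is the middle of some occurrence of 3-2-1 in `π`. -/
def IsMiddle321 (π : Perm α) (y : α) : Prop :=
  ∃ x z, IsOcc321 π x y z

/-- Avoidance of the classical pattern 3-2-1. -/
def Avoids321 (π : Perm α) : Prop :=
  ∀ y, ¬ IsMiddle321 π y

lemma isMiddle321_iff {π : Perm α} {y : α} :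
    IsMiddle321 π y ↔ (∃ x < y, π y < π x) ∧ ∃ z > y, π z < π y := by
  simp only [IsMiddle321, IsOcc321]
  tauto

lemma isMiddle321_dualPerm {π : Perm α} {y : α} :
    IsMiddle321 (dualPerm π) (toDual y) ↔ IsMiddle321 π y := by
  simp [isMiddle321_iff, OrderDual.exists, and_comm]

/-- The 3-2-1-avoiding permutations that fix `s` pointwise. -/
def avoidersFixing (s : Set α) : Set (Perm α) :=
  {π | Avoids321 π ∧ ∀ x ∈ s, π x = x}

lemma avoidersFixing_anti {s t : Set α} (hst : s ⊆ t) :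
    avoidersFixing t ⊆ avoidersFixing s :=
  fun _ hπ ↦ ⟨hπ.1, fun x hx ↦ hπ.2 x (hst hx)⟩

/-- The permutations with exactly one occurrence of 3-2-1, whose middle position is `p`. -/
def single321At (p : α) : Set (Perm α) :=
  {π | ∃ i k, ∀ x y z, IsOcc321 π x y z ↔ x = i ∧ y = p ∧ z = k}

lemma pairwise_disjoint_single321At :
    Pairwise (Function.onFun Disjoint (single321At : α → Set (Perm α))) := by
  intro p q hpq
  refine Set.disjoint_left.2 ?_
  rintro π ⟨i, k, hp⟩ ⟨i', k', hq⟩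
  exact hpq ((hq i p k).1 ((hp i p k).2 ⟨rfl, rfl, rfl⟩)).2.1

/-- The permutation that agrees with `l` before `p`, fixes `p` and agrees with `r` after `p`, except
that `l.symm p` is sent to `r p` and `r.symm p` to `l p`. This describes the values if `l` and `r`
form a gluable pair in the sense of `IsGluable`. -/
def glue (p : α) (l r : Perm α) : Perm α :=
  l * r * swap (l.symm p) p

/-- The pairs that `glue p` is meant for: `l` moves `p` but nothing after `p`, and `r` moves `p` but
nothing before `p`. -/
structure IsGluable (p : α) (l r : Perm α) : Prop where
  left_fixes : ∀ x, p < x → l x = x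
  left_moves : l p ≠ p
  right_fixes : ∀ x, x < p → r x = x
  right_moves : r p ≠ p

namespace IsGluable

variable {p x y z : α} {l r : Perm α}

lemma dual (h : IsGluable p l r) : IsGluable (toDual p) (dualPerm r) (dualPerm l) where
  left_fixes := by simpa [OrderDual.forall] using h.right_fixes
  left_moves := by simpa using h.right_moves
  right_fixes := by simpa [OrderDual.forall] using h.left_fixes
  right_moves := by simpa using h.left_moves

lemma left_le (h : IsGluable p l r) (hx : x ≤ p) : l x ≤ p := by
  by_contra! hlt
  have := l.injective (h.left_fixes _ hlt)
  order

lemma le_right (h : IsGluable p l r) (hx : p ≤ x) : p ≤ r x := by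
  simpa using h.dual.left_le (toDual_le_toDual.2 hx)

lemma left_lt (h : IsGluable p l r) : l p < p :=
  (h.left_le le_rfl).lt_of_ne h.left_moves

lemma lt_right (h : IsGluable p l r) : p < r p := by
  simpa using h.dual.left_lt

lemma left_symm_lt (h : IsGluable p l r) : l.symm p < p := by
  by_contra! hle
  rcases hle.eq_or_lt with heq | hlt
  · exact h.left_moves (by rw [eq_comm, ← l.symm_apply_eq, ← heq])
  · have := h.left_fixes _ hlt
    rw [l.apply_symm_apply] at this
    order

lemma lt_right_symm (h : IsGluable p l r) : p < r.symm p := by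
  simpa using h.dual.left_symm_lt

lemma glue_self (h : IsGluable p l r) : glue p l r p = p := by
  simp [glue, h.right_fixes _ h.left_symm_lt]

lemma glue_of_lt (h : IsGluable p l r) (hx : x < p) :
    glue p l r x = if l x = p then r p else l x := by
  split_ifs with hlx
  · simp [glue, ← l.eq_symm_apply.2 hlx, h.left_fixes _ h.lt_right]
  · have hne : x ≠ l.symm p := fun he ↦ hlx (by simp [he])
    simp [glue, swap_apply_of_ne_of_ne hne hx.ne, h.right_fixes _ hx]

lemma glue_of_gt (h : IsGluable p l r) (hx : p < x) :
    glue p l r x = if r x = p then l p else r x := by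
  have hne : x ≠ l.symm p := (h.left_symm_lt.trans hx).ne'
  have hglue : glue p l r x = l (r x) := by simp [glue, swap_apply_of_ne_of_ne hne hx.ne']
  split_ifs with hrx
  · rw [hglue, hrx]
  · rw [hglue, h.left_fixes _ ((h.le_right hx.le).lt_of_ne' hrx)]

lemma glue_dual (h : IsGluable p l r) :
    glue (toDual p) (dualPerm r) (dualPerm l) = dualPerm (glue p l r) := by
  refine Equiv.ext (OrderDual.forall.2 fun x ↦ ?_)
  rcases lt_trichotomy x p with hx | rfl | hx
  · simp [h.glue_of_lt hx, h.dual.glue_of_gt (toDual_lt_toDual.2 hx), apply_ite toDual]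
  · simp [h.glue_self, h.dual.glue_self]
  · simp [h.glue_of_gt hx, h.dual.glue_of_lt (toDual_lt_toDual.2 hx), apply_ite toDual]

lemma min_glue_of_lt (h : IsGluable p l r) (hx : x < p) : min (glue p l r x) p = l x := by
  have := h.lt_right
  have := h.left_le hx.le
  rw [h.glue_of_lt hx]
  split_ifs <;> grind

lemma max_glue_of_gt (h : IsGluable p l r) (hx : p < x) : max (glue p l r x) p = r x := by
  have hdual := h.dual.min_glue_of_lt (toDual_lt_toDual.2 hx)
  rwa [h.glue_dual, dualPerm_toDual, dualPerm_toDual, ← toDual_max, toDual_inj] at hdual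

lemma glue_lt_glue_iff (h : IsGluable p l r) (hx : x < p) (hy : y < p) :
    glue p l r x < glue p l r y ↔ l x < l y := by
  have := h.lt_right
  have := h.left_le hx.le
  have := h.left_le hy.le
  rw [h.glue_of_lt hx, h.glue_of_lt hy]
  grind

lemma left_le_glue (h : IsGluable p l r) (hz : p ≤ z) : l p ≤ glue p l r z := by
  have := h.left_lt
  have := h.le_right hz
  rcases hz.eq_or_lt with rfl | hlt
  · rw [h.glue_self]; order
  · rw [h.glue_of_gt hlt]; grind

lemma exists_glue_lt_iff (h : IsGluable p l r) (hy : y < p) :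
    (∃ z > y, glue p l r z < glue p l r y) ↔ ∃ z > y, l z < l y := by
  have hpy : l p < glue p l r y ↔ l p < l y := by
    have := h.left_lt
    have := h.lt_right
    rw [h.glue_of_lt hy]
    grind
  constructor
  · rintro ⟨z, hyz, hzy⟩
    rcases lt_or_ge z p with hz | hz
    · exact ⟨z, hyz, (h.glue_lt_glue_iff hz hy).1 hzy⟩
    · exact ⟨p, hy, hpy.1 ((h.left_le_glue hz).trans_lt hzy)⟩
  · rintro ⟨z, hyz, hzy⟩
    rcases lt_trichotomy z p with hz | rfl | hz
    · exact ⟨z, hyz, (h.glue_lt_glue_iff hz hy).2 hzy⟩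
    · refine ⟨r.symm z, hy.trans h.lt_right_symm, ?_⟩
      rwa [h.glue_of_gt h.lt_right_symm, if_pos (r.apply_symm_apply z), hpy]
    · have := h.left_fixes z hz
      have := h.left_le hy.le
      order

lemma isMiddle321_glue_of_lt (h : IsGluable p l r) (hy : y < p) :
    IsMiddle321 (glue p l r) y ↔ IsMiddle321 l y := by
  rw [isMiddle321_iff, isMiddle321_iff, h.exists_glue_lt_iff hy]
  refine and_congr_left' (exists_congr fun x ↦ and_congr_right fun hxy ↦ ?_)
  exact h.glue_lt_glue_iff hy (hxy.trans hy)

lemma isMiddle321_glue_of_gt (h : IsGluable p l r) (hy : p < y) :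
    IsMiddle321 (glue p l r) y ↔ IsMiddle321 r y := by
  rw [← isMiddle321_dualPerm, ← h.glue_dual,
    h.dual.isMiddle321_glue_of_lt (toDual_lt_toDual.2 hy), isMiddle321_dualPerm]

lemma lt_and_lt_glue_iff (h : IsGluable p l r) :
    x < p ∧ p < glue p l r x ↔ x = l.symm p := by
  rw [l.eq_symm_apply]
  constructor
  · rintro ⟨hx, hpx⟩
    rw [← h.min_glue_of_lt hx, min_eq_right hpx.le]
  · intro hlx
    have hx : x < p := (l.eq_symm_apply.2 hlx).trans_lt h.left_symm_lt
    rw [h.glue_of_lt hx, if_pos hlx]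
    exact ⟨hx, h.lt_right⟩

lemma gt_and_glue_lt_iff (h : IsGluable p l r) :
    p < z ∧ glue p l r z < p ↔ z = r.symm p := by
  simpa [h.glue_dual] using h.dual.lt_and_lt_glue_iff (x := toDual z)

lemma isOcc321_glue_self_iff (h : IsGluable p l r) :
    IsOcc321 (glue p l r) x p z ↔ x = l.symm p ∧ z = r.symm p := by
  rw [← h.lt_and_lt_glue_iff, ← h.gt_and_glue_lt_iff, IsOcc321, h.glue_self]
  tauto

lemma lt_of_isMiddle321_left (h : IsGluable p l r) (hy : IsMiddle321 l y) : y < p := by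
  obtain ⟨-, z, hyz, hzy⟩ := isMiddle321_iff.1 hy
  by_contra! hpy
  have hz := h.left_fixes z (hpy.trans_lt hyz)
  rcases hpy.eq_or_lt with rfl | hpy
  · have := h.left_lt
    order
  · have := h.left_fixes y hpy
    order

lemma gt_of_isMiddle321_right (h : IsGluable p l r) (hy : IsMiddle321 r y) : p < y :=
  toDual_lt_toDual.1 (h.dual.lt_of_isMiddle321_left (isMiddle321_dualPerm.2 hy))

lemma glue_mem_single321At_iff (h : IsGluable p l r) :
    glue p l r ∈ single321At p ↔ Avoids321 l ∧ Avoids321 r := by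
  constructor
  · rintro ⟨i, k, hocc⟩
    have hmid : ∀ y, IsMiddle321 (glue p l r) y → y = p :=
      fun y ⟨x, z, hxyz⟩ ↦ ((hocc x y z).1 hxyz).2.1
    refine ⟨fun y hy ↦ ?_, fun y hy ↦ ?_⟩
    · have hlt := h.lt_of_isMiddle321_left hy
      exact hlt.ne (hmid y ((h.isMiddle321_glue_of_lt hlt).2 hy))
    · have hgt := h.gt_of_isMiddle321_right hy
      exact hgt.ne' (hmid y ((h.isMiddle321_glue_of_gt hgt).2 hy))
  · rintro ⟨hl, hr⟩
    refine ⟨l.symm p, r.symm p, fun x y z ↦ ⟨fun hxyz ↦ ?_, ?_⟩⟩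
    · rcases lt_trichotomy y p with hy | rfl | hy
      · exact absurd ((h.isMiddle321_glue_of_lt hy).1 ⟨x, z, hxyz⟩) (hl y)
      · obtain ⟨hx, hz⟩ := h.isOcc321_glue_self_iff.1 hxyz
        exact ⟨hx, rfl, hz⟩
      · exact absurd ((h.isMiddle321_glue_of_gt hy).1 ⟨x, z, hxyz⟩) (hr y)
    · rintro ⟨rfl, rfl, rfl⟩
      exact h.isOcc321_glue_self_iff.2 ⟨rfl, rfl⟩

end IsGluable

variable {p i k : α} {π : Perm α}

lemma apply_eq_self_of_lt_iff_lt [Finite α] {ω : Perm α} (hω : ∀ x, ω x < ω p ↔ x < p) :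
    ω p = p := by
  have hmono : StrictMono fun a : α ↦ (Set.Iio a).ncard :=
    fun a b hab ↦ Set.ncard_lt_ncard (Set.Iio_ssubset_Iio hab)
  have himage : ω '' Set.Iio p = Set.Iio (ω p) := by
    ext y
    simp [ω.image_eq_preimage_symm, ← hω]
  refine hmono.injective ?_
  rw [← himage, Set.ncard_image_of_injective _ ω.injective]

lemma mul_swap_lt_iff (hocc : ∀ x y z, IsOcc321 π x y z ↔ x = i ∧ y = p ∧ z = k) (x : α) :
    (π * swap i k) x < π p ↔ x < p := by
  obtain ⟨hip, hpk, hkp, hpi⟩ := (hocc i p k).2 ⟨rfl, rfl, rfl⟩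
  rcases eq_or_ne x i with rfl | hxi
  · simp [hip, hkp]
  rcases eq_or_ne x k with rfl | hxk
  · simp [hpk.not_gt, hpi.not_gt]
  rw [Perm.mul_apply, swap_apply_of_ne_of_ne hxi hxk]
  constructor
  · intro hlt
    by_contra! hpx
    have hpx : p < x := hpx.lt_of_ne (by rintro rfl; exact hlt.false)
    exact hxk ((hocc i p x).1 ⟨hip, hpx, hlt, hpi⟩).2.2
  · intro hxp
    by_contra! hle
    have hlt : π p < π x := hle.lt_of_ne (π.injective.ne hxp.ne')
    exact hxi ((hocc x p k).1 ⟨hxp, hpk, hkp, hlt⟩).1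

lemma exists_isGluable_glue_eq [Finite α] (hπ : π ∈ single321At p) :
    ∃ l r, IsGluable p l r ∧ glue p l r = π := by
  obtain ⟨i, k, hocc⟩ := hπ
  obtain ⟨hip, hpk, hkp, hpi⟩ := (hocc i p k).2 ⟨rfl, rfl, rfl⟩
  set ω := π * swap i k with hω
  have hωp : ω p = π p := by simp [hω, swap_apply_of_ne_of_ne hip.ne' hpk.ne]
  have hπp : π p = p := hωp ▸ apply_eq_self_of_lt_iff_lt (hωp ▸ mul_swap_lt_iff hocc)
  have hωlt : ∀ x, ω x < p ↔ x < p := by simpa only [hπp] using mul_swap_lt_iff hocc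
  let l := Perm.ofSubtype (ω.subtypePerm (p := (· < p)) hωlt) * swap i p
  have hli : l i = p := by simp [l, Perm.ofSubtype_apply_of_not_mem]
  have hlp : l p = π k := by simp [l, hω, Perm.ofSubtype_apply_of_mem, hip]
  have hl_lt : ∀ x < p, x ≠ i → l x = π x := fun x hx hxi ↦ by
    have hxk := (hx.trans hpk).ne
    simp [l, hω, Perm.ofSubtype_apply_of_mem, hx, swap_apply_of_ne_of_ne, hxi, hx.ne, hxk]
  have hl_gt : ∀ x, p < x → l x = x := fun x hx ↦ by
    have hxi := (hip.trans hx).ne'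
    simp [l, Perm.ofSubtype_apply_of_not_mem, hx.le, swap_apply_of_ne_of_ne, hxi, hx.ne']
  have hli' : l.symm p = i := by rw [← hli, l.symm_apply_apply]
  refine ⟨l, l⁻¹ * π * swap i p, ⟨hl_gt, ?_, fun x hx ↦ ?_, ?_⟩, ?_⟩
  · rw [hlp]; order
  · rcases eq_or_ne x i with rfl | hxi
    · simp [hπp, hli']
    · simp [swap_apply_of_ne_of_ne hxi hx.ne, ← hl_lt x hx hxi]
  · have hrp : (l⁻¹ * π * swap i p) p = π i := by simp [l.symm_apply_eq, hl_gt _ (hπp ▸ hpi)]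
    rw [hrp]; order
  · simp [glue, hli', mul_assoc]

/-- The possible left factors `l` of `glue p l r ∈ single321At p`: the 3-2-1-avoiding permutations
that move `p` but nothing after `p`. -/
def leftFactors (p : α) : Set (Perm α) :=
  avoidersFixing (Set.Ioi p) \ avoidersFixing (Set.Ici p)

/-- The possible right factors `r` of `glue p l r ∈ single321At p`: the 3-2-1-avoiding permutations
that move `p` but nothing before `p`. -/
def rightFactors (p : α) : Set (Perm α) :=
  avoidersFixing (Set.Iio p) \ avoidersFixing (Set.Iic p)

lemma mem_leftFactors {l : Perm α} :
    l ∈ leftFactors p ↔ Avoids321 l ∧ (∀ x, p < x → l x = x) ∧ l p ≠ p := by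
  simp only [leftFactors, avoidersFixing, ← Set.Ioi_insert, Set.mem_sdiff, Set.mem_ofPred_eq,
    Set.forall_mem_insert, Set.mem_Ioi]
  tauto

lemma mem_rightFactors {r : Perm α} :
    r ∈ rightFactors p ↔ Avoids321 r ∧ (∀ x < p, r x = x) ∧ r p ≠ p := by
  simp only [rightFactors, avoidersFixing, ← Set.Iio_insert, Set.mem_sdiff, Set.mem_ofPred_eq,
    Set.forall_mem_insert, Set.mem_Iio]
  tauto

lemma isGluable_of_mem {l r : Perm α} (hl : l ∈ leftFactors p) (hr : r ∈ rightFactors p) :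
    IsGluable p l r :=
  ⟨(mem_leftFactors.1 hl).2.1, (mem_leftFactors.1 hl).2.2,
    (mem_rightFactors.1 hr).2.1, (mem_rightFactors.1 hr).2.2⟩

lemma perm_ext_of_ne {α : Type*} {σ τ : Perm α} {p : α}
    (h : ∀ x ≠ p, σ x = τ x) : σ = τ := by
  suffices hp : σ p = τ p from Equiv.ext fun x ↦ (eq_or_ne x p).elim (fun hx ↦ hx ▸ hp) (h x)
  have hfix : σ.symm (τ p) = p := by
    by_contra! hne
    have happly := h _ hne
    rw [σ.apply_symm_apply, τ.apply_eq_iff_eq] at happly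
    exact hne happly.symm
  rw [← σ.symm_apply_eq.1 hfix]

lemma IsGluable.eq_of_glue_eq {l r l' r' : Perm α} (h : IsGluable p l r) (h' : IsGluable p l' r')
    (heq : glue p l r = glue p l' r') : l = l' ∧ r = r' := by
  constructor <;> refine perm_ext_of_ne (p := p) fun x hx ↦ ?_
  · rcases hx.lt_or_gt with hx | hx
    · rw [← h.min_glue_of_lt hx, heq, h'.min_glue_of_lt hx]
    · rw [h.left_fixes x hx, h'.left_fixes x hx]
  · rcases hx.lt_or_gt with hx | hx
    · rw [h.right_fixes x hx, h'.right_fixes x hx]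
    · rw [← h.max_glue_of_gt hx, heq, h'.max_glue_of_gt hx]

theorem bijOn_glue [Finite α] (p : α) :
    Set.BijOn (fun f : Perm α × Perm α ↦ glue p f.1 f.2) (leftFactors p ×ˢ rightFactors p)
      (single321At p) := by
  refine ⟨?_, ?_, ?_⟩
  · rintro ⟨l, r⟩ ⟨hl, hr⟩
    exact (isGluable_of_mem hl hr).glue_mem_single321At_iff.2
      ⟨(mem_leftFactors.1 hl).1, (mem_rightFactors.1 hr).1⟩
  · rintro ⟨l, r⟩ ⟨hl, hr⟩ ⟨l', r'⟩ ⟨hl', hr'⟩ heq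
    exact Prod.ext_iff.2 ((isGluable_of_mem hl hr).eq_of_glue_eq (isGluable_of_mem hl' hr') heq)
  · intro π hπ
    obtain ⟨l, r, h, rfl⟩ := exists_isGluable_glue_eq hπ
    obtain ⟨hl, hr⟩ := h.glue_mem_single321At_iff.1 hπ
    exact ⟨(l, r), ⟨mem_leftFactors.2 ⟨hl, h.left_fixes, h.left_moves⟩,
      mem_rightFactors.2 ⟨hr, h.right_fixes, h.right_moves⟩⟩, rfl⟩

theorem ncard_single321At [Finite α] (p : α) :
    (single321At p).ncard = (leftFactors p).ncard * (rightFactors p).ncard := by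
  rw [← (bijOn_glue p).ncard_eq, Set.ncard_prod]

end Gluing

section Catalan

variable {n : ℕ}

/-- The permutation with last entry `a` whose remaining entries form the pattern `σ`. -/
def insertLast (a : Fin (n + 1)) (σ : Perm (Fin n)) : Perm (Fin (n + 1)) :=
  finSuccEquivLast.trans ((optionCongr σ).trans (finSuccEquiv' a).symm)

@[simp]
lemma insertLast_last (a : Fin (n + 1)) (σ : Perm (Fin n)) : insertLast a σ (Fin.last n) = a := by
  simp [insertLast]

@[simp]
lemma insertLast_castSucc (a : Fin (n + 1)) (σ : Perm (Fin n)) (x : Fin n) :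
    insertLast a σ x.castSucc = a.succAbove (σ x) := by
  simp [insertLast]

lemma insertLast_bijective :
    Function.Bijective fun f : Fin (n + 1) × Perm (Fin n) ↦ insertLast f.1 f.2 := by
  refine (Fintype.bijective_iff_injective_and_card _).2 ⟨?_, ?_⟩
  · rintro ⟨a, σ⟩ ⟨b, τ⟩ heq
    obtain rfl : a = b := by simpa using Equiv.congr_fun heq (Fin.last n)
    refine Prod.ext rfl (Equiv.ext fun x ↦ ?_)
    simpa using Equiv.congr_fun heq x.castSucc
  · simp [Fintype.card_perm, Nat.factorial_succ]

lemma ncard_perm_fin_succ (S : Set (Perm (Fin (n + 1)))) :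
    S.ncard = ∑ a, {σ | insertLast a σ ∈ S}.ncard := by
  have hS : S = ⋃ a, insertLast a '' {σ | insertLast a σ ∈ S} := by
    ext π
    obtain ⟨⟨a, σ⟩, rfl⟩ := insertLast_bijective.surjective π
    simp only [Set.mem_iUnion, Set.mem_image, Set.mem_ofPred_eq]
    exact ⟨fun h ↦ ⟨a, σ, h, rfl⟩, fun ⟨_, _, h, heq⟩ ↦ heq ▸ h⟩
  conv_lhs => rw [hS]
  rw [ncard_iUnion_eq_sum fun a b hab ↦ ?_]
  · refine Finset.sum_congr rfl fun a _ ↦ Set.ncard_image_of_injective _ fun σ τ heq ↦ ?_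
    exact congrArg Prod.snd (insertLast_bijective.injective (a₁ := (a, σ)) (a₂ := (a, τ)) heq)
  · refine Set.disjoint_left.2 ?_
    rintro _ ⟨σ, -, rfl⟩ ⟨τ, -, heq⟩
    exact hab (by simpa using Equiv.congr_fun heq.symm (Fin.last n))

lemma isMiddle321_insertLast_castSucc {a : Fin (n + 1)} {σ : Perm (Fin n)} {y : Fin n} :
    IsMiddle321 (insertLast a σ) y.castSucc ↔
      IsMiddle321 σ y ∨ (∃ x < y, σ y < σ x) ∧ (a : ℕ) ≤ σ y := by
  rw [isMiddle321_iff, isMiddle321_iff]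
  simp [Fin.exists_iff_castSucc, Fin.lt_succAbove_iff_le_castSucc, Fin.le_iff_val_le_val,
    (Fin.le_last _).not_gt, and_or_left, or_comm]

/-- The 3-2-1-avoiding permutations of `Fin n` whose values `≥ k` appear in increasing order, that
is, in which the smaller value of every inversion is less than `k`. -/
def avoidersIncreasingAbove (n k : ℕ) : Set (Perm (Fin n)) :=
  {σ | Avoids321 σ ∧ ∀ x y, x < y → σ y < σ x → (σ y : ℕ) < k}

lemma avoids321_insertLast_iff {a : Fin (n + 1)} {σ : Perm (Fin n)} :
    Avoids321 (insertLast a σ) ↔ σ ∈ avoidersIncreasingAbove n a := by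
  have hlast : ¬ IsMiddle321 (insertLast a σ) (Fin.last n) := fun h ↦ by
    obtain ⟨-, z, hz, -⟩ := isMiddle321_iff.1 h
    exact hz.not_ge z.le_last
  simp only [Avoids321, Fin.forall_iff_castSucc, hlast, isMiddle321_insertLast_castSucc,
    avoidersIncreasingAbove, Set.mem_ofPred_eq]
  grind

lemma avoidersIncreasingAbove_of_le {k : ℕ} (hk : n ≤ k) :
    avoidersIncreasingAbove n k = {σ | Avoids321 σ} := by
  simp only [avoidersIncreasingAbove]
  grind

lemma avoidersIncreasingAbove_succ_self (n : ℕ) :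
    avoidersIncreasingAbove (n + 1) (n + 1) = avoidersIncreasingAbove (n + 1) n := by
  simp only [avoidersIncreasingAbove]
  grind

lemma forall_inversion_insertLast_iff {a : Fin (n + 1)} {σ : Perm (Fin n)} {k : ℕ} :
    (∀ x y, x < y → insertLast a σ y < insertLast a σ x → (insertLast a σ y : ℕ) < k) ↔
      (∀ x y, x < y → σ y < σ x → (a.succAbove (σ y) : ℕ) < k) ∧
        (a = Fin.last n ∨ (a : ℕ) < k) := by
  have hlast : (∀ x, a ≤ (σ x).castSucc → (a : ℕ) < k) ↔ a = Fin.last n ∨ (a : ℕ) < k := by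
    constructor
    · intro h
      by_contra! ⟨hne, hka⟩
      obtain ⟨b, rfl⟩ := Fin.exists_castSucc_eq.2 hne
      exact hka.not_gt (h (σ.symm b) (by simp))
    · rintro (rfl | hak) x hx
      · exact absurd (Fin.castSucc_lt_last _) hx.not_gt
      · exact hak
  rw [← hlast]
  simp only [Fin.forall_iff_castSucc, insertLast_last, insertLast_castSucc, lt_self_iff_false,
    IsEmpty.forall_iff, implies_true, (Fin.le_last _).not_gt, and_self, Fin.castSucc_lt_last,
    Fin.lt_succAbove_iff_le_castSucc, forall_const, Fin.castSucc_lt_castSucc_iff,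
    Fin.succAbove_lt_succAbove_iff, true_and]
  grind

lemma insertLast_mem_iff_of_lt {a : Fin (n + 1)} {σ : Perm (Fin n)} {k : ℕ} (hak : a < k) :
    insertLast a σ ∈ avoidersIncreasingAbove (n + 1) k ↔ σ ∈ avoidersIncreasingAbove n a := by
  rw [avoidersIncreasingAbove, Set.mem_ofPred_eq, avoids321_insertLast_iff,
    forall_inversion_insertLast_iff, and_iff_left_iff_imp]
  refine fun hσ ↦ ⟨fun x y hxy hlt ↦ ?_, .inr hak⟩
  have hya : (σ y).castSucc < a := hσ.2 x y hxy hlt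
  rw [Fin.succAbove_of_castSucc_lt _ _ hya]
  exact lt_trans hya hak

lemma insertLast_last_mem_iff {σ : Perm (Fin n)} {k : ℕ} :
    insertLast (Fin.last n) σ ∈ avoidersIncreasingAbove (n + 1) k ↔
      σ ∈ avoidersIncreasingAbove n k := by
  rw [avoidersIncreasingAbove, Set.mem_ofPred_eq, avoids321_insertLast_iff,
    forall_inversion_insertLast_iff, Fin.val_last, avoidersIncreasingAbove_of_le le_rfl]
  simp [avoidersIncreasingAbove]

lemma insertLast_castSucc_notMem {a : Fin n} {σ : Perm (Fin n)} {k : ℕ} (hka : k ≤ a) :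
    insertLast a.castSucc σ ∉ avoidersIncreasingAbove (n + 1) k := fun h ↦ by
  rcases (forall_inversion_insertLast_iff.1 h.2).2 with hlast | hlt
  · exact a.castSucc_ne_last hlast
  · exact hka.not_gt hlt

lemma ncard_avoidersIncreasingAbove_succ {k : ℕ} (hk : k ≤ n) :
    (avoidersIncreasingAbove (n + 1) k).ncard =
      ∑ a ∈ Finset.range (k + 1), (avoidersIncreasingAbove n a).ncard := by
  have hterm : ∀ a : Fin n,
      {σ | insertLast a.castSucc σ ∈ avoidersIncreasingAbove (n + 1) k}.ncard =
        if (a : ℕ) < k then (avoidersIncreasingAbove n a).ncard else 0 := fun a ↦ by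
    split_ifs with hak
    · simp [insertLast_mem_iff_of_lt, hak]
    · simp [insertLast_castSucc_notMem (not_lt.1 hak)]
  have hfilter : {a ∈ Finset.range n | a < k} = Finset.range k := by
    ext a
    simp only [Finset.mem_filter, Finset.mem_range]
    lia
  rw [ncard_perm_fin_succ, Fin.sum_univ_castSucc, Finset.sum_range_succ]
  simp only [hterm, insertLast_last_mem_iff, Set.ofPred_mem_eq]
  rw [Fin.sum_univ_eq_sum_range fun a ↦ if a < k then (avoidersIncreasingAbove n a).ncard else 0,
    ← Finset.sum_filter, hfilter]

lemma ncard_avoidersIncreasingAbove_succ_succ {k : ℕ} (hk : k < n) :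
    (avoidersIncreasingAbove (n + 1) (k + 1)).ncard =
      (avoidersIncreasingAbove (n + 1) k).ncard + (avoidersIncreasingAbove n (k + 1)).ncard := by
  rw [ncard_avoidersIncreasingAbove_succ hk, Finset.sum_range_succ,
    ncard_avoidersIncreasingAbove_succ hk.le]

-- The cardinality is the ballot number `(n + k).choose n - (n + k).choose (n + 1)`.
lemma ncard_avoidersIncreasingAbove_add_choose {k : ℕ} (hk : k ≤ n) :
    (avoidersIncreasingAbove n k).ncard + (n + k).choose (n + 1) = (n + k).choose n := by
  induction n generalizing k with
  | zero =>
    obtain rfl : k = 0 := by lia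
    simp [avoidersIncreasingAbove_of_le, Avoids321]
  | succ n ihn =>
    induction k with
    | zero => simpa [ncard_avoidersIncreasingAbove_succ] using ihn n.zero_le
    | succ k ihk =>
      have hpascal := Nat.choose_succ_succ (n + 1 + k) (n + 1)
      have hpascal' := Nat.choose_succ_succ (n + 1 + k) n
      have hprev := ihk (by lia)
      rcases hk.eq_or_lt with heq | hlt
      · obtain rfl : k = n := by lia
        have hsymm : (k + 1 + k).choose k = (k + 1 + k).choose (k + 1) :=
          Nat.choose_symm_add.symm
        rw [avoidersIncreasingAbove_succ_self]
        grind
      · have hrec := ncard_avoidersIncreasingAbove_succ_succ (n := n) (k := k) (by lia)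
        have := ihn (k := k + 1) (by lia)
        grind

theorem ncard_avoids321 (n : ℕ) : {σ : Perm (Fin n) | Avoids321 σ}.ncard = catalan n := by
  have hballot := ncard_avoidersIncreasingAbove_add_choose (le_refl n)
  have hchoose := Nat.choose_succ_right_eq (n + n) n
  rw [avoidersIncreasingAbove_of_le le_rfl] at hballot
  refine Nat.eq_of_mul_eq_mul_left n.succ_pos ?_
  rw [Nat.succ_eq_add_one, succ_mul_catalan_eq_centralBinom, Nat.centralBinom, two_mul]
  rw [Nat.add_sub_cancel] at hchoose
  nlinarith

lemma ncard_avoidersFixing_le {m : ℕ} (hmn : m ≤ n) :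
    (avoidersFixing {x : Fin n | m ≤ (x : ℕ)}).ncard = catalan m := by
  induction n, hmn using Nat.le_induction with
  | base => simp [avoidersFixing, ncard_avoids321]
  | succ n hmn ih =>
    rw [ncard_perm_fin_succ, Fin.sum_univ_castSucc, ← ih]
    simp [avoidersFixing, avoids321_insertLast_iff, Fin.forall_iff_castSucc, hmn,
      avoidersIncreasingAbove_of_le, Fin.castSucc_ne_last]

lemma isMiddle321_permCongr_rev {π : Perm (Fin n)} {y : Fin n} :
    IsMiddle321 (Fin.revPerm.permCongr π) y ↔ IsMiddle321 π y.rev := by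
  rw [isMiddle321_iff, isMiddle321_iff, and_comm]
  refine and_congr (Fin.revPerm.exists_congr_left.trans ?_)
    (Fin.revPerm.exists_congr_left.trans ?_) <;>
  simp [Fin.lt_rev_iff, Fin.rev_lt_iff]

lemma ncard_avoidersFixing_rev (s : Set (Fin n)) :
    (avoidersFixing (Fin.rev ⁻¹' s)).ncard = (avoidersFixing s).ncard := by
  have hpre : avoidersFixing (Fin.rev ⁻¹' s) =
      Fin.revPerm.permCongr ⁻¹' avoidersFixing s := by
    ext π
    simp only [avoidersFixing, Avoids321, isMiddle321_permCongr_rev, Set.mem_preimage,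
      Set.mem_ofPred_eq, permCongr_apply, Fin.revPerm_symm, Fin.revPerm_apply, Fin.rev_eq_iff]
    refine and_congr Fin.revPerm.forall_congr_left (Fin.revPerm.forall_congr_left.trans ?_)
    simp
  rw [hpre, ncard_preimage_equiv]

lemma ncard_avoidersFixing_Ioi (p : Fin n) :
    (avoidersFixing (Set.Ioi p)).ncard = catalan (p + 1) :=
  ncard_avoidersFixing_le p.2

lemma ncard_avoidersFixing_Ici (p : Fin n) : (avoidersFixing (Set.Ici p)).ncard = catalan p :=
  ncard_avoidersFixing_le p.2.le

lemma ncard_avoidersFixing_Iio (p : Fin n) :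
    (avoidersFixing (Set.Iio p)).ncard = catalan (n - p) := by
  have hrev : Fin.rev ⁻¹' Set.Iio p = Set.Ioi p.rev := by ext; simp
  rw [← ncard_avoidersFixing_rev, hrev, ncard_avoidersFixing_Ioi, Fin.val_rev]
  congr 1
  lia

lemma ncard_avoidersFixing_Iic (p : Fin n) :
    (avoidersFixing (Set.Iic p)).ncard = catalan (n - p - 1) := by
  have hrev : Fin.rev ⁻¹' Set.Iic p = Set.Ici p.rev := by ext; simp
  rw [← ncard_avoidersFixing_rev, hrev, ncard_avoidersFixing_Ici, Fin.val_rev, Nat.sub_sub]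

end Catalan

section Counting

variable {n : ℕ}

lemma ncard_leftFactors (p : Fin n) :
    ((leftFactors p).ncard : ℤ) = catalan (p + 1) - catalan p := by
  rw [leftFactors, Set.cast_ncard_sdiff (avoidersFixing_anti Set.Ioi_subset_Ici_self)
      (Set.toFinite _), ncard_avoidersFixing_Ioi, ncard_avoidersFixing_Ici]

lemma ncard_rightFactors (p : Fin n) :
    ((rightFactors p).ncard : ℤ) = catalan (n - p) - catalan (n - p - 1) := by
  rw [rightFactors, Set.cast_ncard_sdiff (avoidersFixing_anti Set.Iio_subset_Iic_self)
      (Set.toFinite _), ncard_avoidersFixing_Iio, ncard_avoidersFixing_Iic]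

lemma isOcc321_revPerm_mul_iff {π : Perm (Fin n)} {x y z : Fin n} :
    IsOcc321 (Fin.revPerm * π) x y z ↔ x < y ∧ y < z ∧ π x < π y ∧ π y < π z := by
  simp [IsOcc321, and_comm]

lemma occ123_eq_one_iff {π : Perm (Fin n)} :
    occ123 π = 1 ↔ Fin.revPerm * π ∈ ⋃ p, single321At p := by
  simp only [occ123, Finset.card_eq_one, single321At, Finset.ext_iff, Prod.exists, Prod.forall,
    Finset.mem_filter_univ, Finset.mem_singleton, Prod.mk.injEq, Set.mem_iUnion, Set.mem_ofPred_eq,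
    isOcc321_revPerm_mul_iff]
  exact exists_comm

lemma ncard_occ123_eq_one (n : ℕ) :
    {π : Perm (Fin n) | occ123 π = 1}.ncard = ∑ p : Fin n, (single321At p).ncard := by
  have hpre : {π : Perm (Fin n) | occ123 π = 1} =
      Equiv.mulLeft Fin.revPerm ⁻¹' ⋃ p, single321At p :=
    Set.ext fun _ ↦ occ123_eq_one_iff
  rw [hpre, ncard_preimage_equiv,
    ncard_iUnion_eq_sum pairwise_disjoint_single321At]

end Counting

/-- The number of permutations of length `n ≥ 3` with exactly one occurrence of
the classical pattern 1-2-3 equals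
`∑_(i=2)^(n-1) (C_(n-i+1) - C_(n-i)) * (C_i - C_(i-1))`. -/
theorem single_123_count_sum (n : ℕ) (hn : 3 ≤ n) :
    ({π : Equiv.Perm (Fin n) | occ123 π = 1}.ncard : ℤ)
      = ∑ i ∈ Finset.Icc 2 (n - 1),
          ((catalan (n - i + 1) : ℤ) - catalan (n - i)) *
            ((catalan i : ℤ) - catalan (i - 1)) := by
  let f (i : ℕ) : ℤ := ((catalan (n - i + 1) : ℤ) - catalan (n - i)) *
    ((catalan i : ℤ) - catalan (i - 1))
  calc ({π : Equiv.Perm (Fin n) | occ123 π = 1}.ncard : ℤ)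
    _ = ∑ p : Fin n, f (p + 1) := by
      rw [ncard_occ123_eq_one, Nat.cast_sum]
      refine Finset.sum_congr rfl fun p _ ↦ ?_
      rw [ncard_single321At, Nat.cast_mul, ncard_leftFactors, ncard_rightFactors, mul_comm]
      simp [f, Nat.sub_add_eq, Nat.sub_add_cancel (Nat.sub_pos_of_lt p.2)]
    _ = ∑ i ∈ Finset.Ico 1 (n + 1), f i := by
      rw [Fin.sum_univ_eq_sum_range (fun p ↦ f (p + 1)), Finset.range_eq_Ico,
        Finset.sum_Ico_add', zero_add]
    _ = ∑ i ∈ Finset.Icc 2 (n - 1), f i := by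
      refine (Finset.sum_subset (fun i hi ↦ ?_) fun i hi hi' ↦ ?_).symm
      · simp only [Finset.mem_Icc, Finset.mem_Ico] at hi ⊢
        lia
      · simp only [Finset.mem_Icc, Finset.mem_Ico] at hi hi'
        obtain rfl | rfl : i = 1 ∨ i = n := by lia
        all_goals simp [f]
end

section
/- For n ≥ 3 and 2 ≤ b ≤ n−1, the number of permutations of length n with exactly one occurrence of the vincular pattern 1-23 and exactly one occurrence of the classical pattern 1-2-3, whose unique occurrence of 1-23 uses middle value b, equals (C_{n−b+1} − C_{n−b}) * C_{b−1}. -/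
/-! Let `i, p, q` be the only 123-occurrence of `π`, with `q` right after `p`. Every position
before `p` other than `i` then carries a value above `π p`, and every position after `p` other than
`q` a value below it. Hence rotating the three letters, so that `i` receives the middle one, `p` the
largest and `q` the smallest, turns `π` into a skew sum `σ ⊖ ρ` of two 123-avoiders in which `σ`
occupies the positions up to `p` and has its least letter at `i ≠ p`. Every pair of 123-avoiders in
which `σ` does not end with its least letter arises exactly once. As the least letter of the left
block is now the middle value `b`, the lengths of `σ` and `ρ` are `n - b + 1` and `b - 1`. An
avoider ending with its least letter is an arbitrary shorter avoider followed by that letter, so the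
count reduces to the fact that 123-avoiders are counted by the Catalan numbers.

For the latter, count the avoiders whose first `k` letters decrease: inserting the largest letter
gives a recursion for their numbers, which is also satisfied by the coefficients of `C ^ (k + 1)`,
where `C = 1 + X * C ^ 2` is the Catalan series. -/

open Equiv Function Set

section Patterns

variable {α α' β β' : Type*}

/-- The positions `x, y, z` carry an occurrence of the pattern 1-2-3 in the word `f`. -/
def IsOcc123 [LT α] [LT β] (f : α → β) (x y z : α) : Prop :=
  x < y ∧ y < z ∧ f x < f y ∧ f y < f z

/-- The positions `x, y, z` carry the one and only occurrence of the pattern 1-2-3 in the word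
`f`. -/
def IsUniqueOcc123 [LT α] [LT β] (f : α → β) (x y z : α) : Prop :=
  IsOcc123 f x y z ∧ ∀ x' y' z', IsOcc123 f x' y' z' → x' = x ∧ y' = y ∧ z' = z

/-- The subword of `f` at the positions in `s` avoids the pattern 1-2-3. -/
def Avoids123On [LT α] [LT β] (f : α → β) (s : Set α) : Prop :=
  ∀ x ∈ s, ∀ y ∈ s, ∀ z ∈ s, ¬IsOcc123 f x y z

lemma Avoids123On.mono [LT α] [LT β] {f : α → β} {s t : Set α} (hst : s ⊆ t)
    (h : Avoids123On f t) : Avoids123On f s :=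
  fun x hx y hy z hz ↦ h x (hst hx) y (hst hy) z (hst hz)

lemma avoids123On_image_iff [LinearOrder α] [Preorder α'] [LT β] [LT β'] {f : α → β}
    {g : α' → β'} {e : α → α'} {s : Set α} (he : StrictMonoOn e s)
    (hfg : ∀ x ∈ s, ∀ y ∈ s, g (e x) < g (e y) ↔ f x < f y) :
    Avoids123On g (e '' s) ↔ Avoids123On f s := by
  simp only [Avoids123On, forall_mem_image, IsOcc123]
  refine forall₂_congr fun x hx ↦ forall₂_congr fun y hy ↦ forall₂_congr fun z hz ↦ ?_
  rw [he.lt_iff_lt hx hy, he.lt_iff_lt hy hz, hfg x hx y hy, hfg y hy z hz]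

lemma avoids123On_univ_iff_of_forall_lt [Preorder α] [Preorder β] {f : α → β} {s : Set α}
    (hs : IsLowerSet s) (hf : ∀ x ∈ s, ∀ z ∉ s, f z < f x) :
    Avoids123On f univ ↔ Avoids123On f s ∧ Avoids123On f sᶜ := by
  refine ⟨fun h ↦ ⟨h.mono (subset_univ s), h.mono (subset_univ sᶜ)⟩, ?_⟩
  rintro ⟨hs_av, hsc_av⟩ x - y - z - ⟨hxy, hyz, fxy, fyz⟩
  by_cases hx : x ∈ s
  · have mem_of_lt : ∀ w, f x < f w → w ∈ s := fun w hw ↦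
      by_contra fun hws ↦ (hf x hx w hws).asymm hw
    exact hs_av x hx y (mem_of_lt y fxy) z (mem_of_lt z (fxy.trans fyz)) ⟨hxy, hyz, fxy, fyz⟩
  · exact hsc_av x hx y (fun hy ↦ hx (hs hxy.le hy)) z (fun hz ↦ hx (hs (hxy.trans hyz).le hz))
      ⟨hxy, hyz, fxy, fyz⟩

lemma avoids123On_univ_iff_of_strict_max [Preorder α] [LinearOrder β] {f : α → β} {i : α}
    (hi : ∀ x ≠ i, f x < f i) (hf : Injective f) :
    Avoids123On f univ ↔ Avoids123On f {i}ᶜ ∧ StrictAntiOn f (Iio i) := by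
  have le_apply : ∀ x, f x ≤ f i := fun x ↦ by
    rcases eq_or_ne x i with rfl | hx
    exacts [le_rfl, (hi x hx).le]
  refine ⟨fun h ↦ ⟨h.mono (subset_univ _), fun x _ y hy hxy ↦ ?_⟩, ?_⟩
  · by_contra hfxy
    exact h x trivial y trivial i trivial
      ⟨hxy, hy, (not_lt.mp hfxy).lt_of_ne (hf.ne hxy.ne), hi y hy.ne⟩
  · rintro ⟨h_av, h_anti⟩ x - y - z - ⟨hxy, hyz, fxy, fyz⟩
    have hxi : x ≠ i := by rintro rfl; exact fxy.not_ge (le_apply y)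
    have hyi : y ≠ i := by rintro rfl; exact fyz.not_ge (le_apply z)
    rcases eq_or_ne z i with rfl | hzi
    · exact (h_anti (hxy.trans hyz) hyz hxy).asymm fxy
    · exact h_av x hxi y hyi z hzi ⟨hxy, hyz, fxy, fyz⟩

/-- The only 123-occurrence in `f` with middle position `p` is `i, p, q`. -/
structure IsPivot [LT α] [LT β] (f : α → β) (i p q : α) : Prop where
  isOcc : IsOcc123 f i p q
  eq_of_lt : ∀ x < p, f x < f p → x = i
  eq_of_gt : ∀ z > p, f p < f z → z = q

/-- The word `f` is the skew sum of its blocks up to `p` and after `p`, and the least letter of the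
first block stands at the position `i` before the last one. -/
structure IsSkewMin [Preorder α] [LT β] (f : α → β) (i p : α) : Prop where
  lt : i < p
  apply_lt_of_le : ∀ x ≤ p, x ≠ i → f i < f x
  apply_lt_of_gt : ∀ z > p, f z < f i

section LinearOrder

variable [LinearOrder α] [LinearOrder β]

lemma IsPivot.mem_insert_Iio {f : α → β} {i p q x y z : α} (h : IsPivot f i p q)
    (hxyz : IsOcc123 f x y z) (hyp : y < p) : x < p ∧ z ∈ insert q (Iio p) := by
  obtain ⟨hxy, -, fxy, fyz⟩ := hxyz
  have hxp : x < p := hxy.trans hyp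
  have le_of_lt : ∀ w < p, w ≠ i → f p ≤ f w := fun w hw hwi ↦
    not_lt.mp fun hfw ↦ hwi (h.eq_of_lt w hw hfw)
  have hpfy : f p ≤ f y := by
    refine le_of_lt y hyp fun hyi ↦ ?_
    subst hyi
    exact (fxy.trans h.isOcc.2.2.1).not_ge (le_of_lt x hxp hxy.ne)
  have hpfz : f p < f z := hpfy.trans_lt fyz
  refine ⟨hxp, ?_⟩
  rcases lt_trichotomy z p with hzp | rfl | hpz
  exacts [Or.inr hzp, hpfz.false.elim, Or.inl (h.eq_of_gt z hpz hpfz)]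

lemma IsPivot.mem_insert_Ioi {f : α → β} {i p q x y z : α} (h : IsPivot f i p q) (hpq : p ⋖ q)
    (hxyz : IsOcc123 f x y z) (hpy : p < y) : x ∈ insert i (Ioi q) ∧ q < y := by
  obtain ⟨-, hyz, fxy, fyz⟩ := hxyz
  have fpq : f p < f q := h.isOcc.2.2.2
  have le_of_gt : ∀ w > q, f w ≤ f p := fun w hw ↦
    not_lt.mp fun hfw ↦ hw.ne' (h.eq_of_gt w (hpq.lt.trans hw) hfw)
  have hqy : q < y := by
    refine (hpq.ge_of_gt hpy).lt_of_ne fun hqy ↦ ?_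
    subst hqy
    exact (fpq.trans fyz).not_ge (le_of_gt z hyz)
  have hfxp : f x < f p := fxy.trans_le (le_of_gt y hqy)
  refine ⟨?_, hqy⟩
  rcases lt_trichotomy x p with hxp | rfl | hpx
  · exact Or.inl (h.eq_of_lt x hxp hfxp)
  · exact hfxp.false.elim
  · refine Or.inr ((hpq.ge_of_gt hpx).lt_of_ne fun hqx ↦ ?_)
    subst hqx
    exact (hfxp.trans fpq).false

theorem isUniqueOcc123_iff_of_covBy {f : α → β} {i p q : α} (hpq : p ⋖ q) :
    IsUniqueOcc123 f i p q ↔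
      IsPivot f i p q ∧ Avoids123On f (insert q (Iio p)) ∧ Avoids123On f (insert i (Ioi q)) := by
  constructor
  · rintro ⟨⟨hip, -, fip, fpq⟩, huniq⟩
    have avoids_of_notMem : ∀ s : Set α, p ∉ s → Avoids123On f s := fun s hs x _ y hy z _ h ↦
      hs ((huniq x y z h).2.1 ▸ hy)
    refine ⟨⟨⟨hip, hpq.lt, fip, fpq⟩, fun x hx hfx ↦ (huniq x p q ⟨hx, hpq.lt, hfx, fpq⟩).1,
      fun z hz hfz ↦ (huniq i p z ⟨hip, hz, fip, hfz⟩).2.2⟩,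
      avoids_of_notMem _ ?_, avoids_of_notMem _ ?_⟩
    · simp [hpq.lt.ne]
    · simp [hip.ne', hpq.le]
  · rintro ⟨h, h_left, h_right⟩
    refine ⟨h.isOcc, fun x y z hxyz ↦ ?_⟩
    rcases lt_trichotomy y p with hyp | rfl | hpy
    · obtain ⟨hx, hz⟩ := h.mem_insert_Iio hxyz hyp
      exact (h_left x (Or.inr hx) y (Or.inr hyp) z hz hxyz).elim
    · obtain ⟨hxy, hyz, fxy, fyz⟩ := hxyz
      exact ⟨h.eq_of_lt x hxy fxy, rfl, h.eq_of_gt z hyz fyz⟩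
    · obtain ⟨hx, hy⟩ := h.mem_insert_Ioi hpq hxyz hpy
      exact (h_right x hx y (Or.inr hy) z (Or.inr (hy.trans hxyz.2.1)) hxyz).elim

lemma IsSkewMin.apply_lt_iff {f : α → β} {i p z : α} (h : IsSkewMin f i p) :
    f z < f i ↔ p < z := by
  refine ⟨fun hz ↦ ?_, h.apply_lt_of_gt z⟩
  by_contra! hzp
  exact hz.asymm (h.apply_lt_of_le z hzp fun hzi ↦ hz.ne (congrArg f hzi))

end LinearOrder

end Patterns

section PivotCycle

variable {α β : Type*}

/-- The 3-cycle `i ↦ q ↦ p ↦ i`, for distinct `i`, `p` and `q`. Precomposing with it makes `i, p, q`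
the unique 123-occurrence of a word that is a skew sum of avoiders split between `p` and `q` and
that has the minimum of its left block at `i`. -/
def pivotCycle [DecidableEq α] (i p q : α) : Perm α :=
  swap i q * swap p q

section Apply

variable [DecidableEq α] {i p q x : α}

lemma pivotCycle_apply_left (hip : i ≠ p) (hiq : i ≠ q) : pivotCycle i p q i = q := by
  simp [pivotCycle, swap_apply_of_ne_of_ne hip hiq]

lemma pivotCycle_apply_middle (i p q : α) : pivotCycle i p q p = i := by
  simp [pivotCycle]

lemma pivotCycle_apply_right (hip : i ≠ p) (hpq : p ≠ q) : pivotCycle i p q q = p := by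
  simp [pivotCycle, swap_apply_of_ne_of_ne hip.symm hpq]

lemma pivotCycle_apply_of_ne (hxi : x ≠ i) (hxp : x ≠ p) (hxq : x ≠ q) :
    pivotCycle i p q x = x := by
  simp [pivotCycle, swap_apply_of_ne_of_ne, hxi, hxp, hxq]

end Apply

variable [LinearOrder α] [LinearOrder β] {f : α → β} {i p q : α}

lemma isPivot_comp_pivotCycle (hf : Injective f) (hip : i < p) (hpq : p ⋖ q) :
    IsPivot (f ∘ pivotCycle i p q) i p q ↔ IsSkewMin f i p := by
  have hiq : i < q := hip.trans hpq.lt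
  have apply_i := pivotCycle_apply_left hip.ne hiq.ne
  have apply_p := pivotCycle_apply_middle i p q
  have apply_q := pivotCycle_apply_right hip.ne hpq.ne
  constructor
  · rintro ⟨⟨-, -, fip, fpq⟩, eq_of_lt, eq_of_gt⟩
    simp only [comp_apply, apply_i, apply_p, apply_q] at fip fpq eq_of_lt eq_of_gt
    refine ⟨hip, fun x hxp hxi ↦ ?_, fun z hpz ↦ ?_⟩
    · rcases hxp.eq_or_lt with rfl | hxp
      · exact fpq
      · refine (not_lt.mp fun h ↦ hxi (eq_of_lt x hxp ?_)).lt_of_ne (hf.ne hxi.symm)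
        rwa [pivotCycle_apply_of_ne hxi hxp.ne (hxp.trans hpq.lt).ne]
    · rcases (hpq.ge_of_gt hpz).eq_or_lt with rfl | hqz
      · exact fip
      · refine (not_lt.mp fun h ↦ hqz.ne' (eq_of_gt z hpz ?_)).lt_of_ne (hf.ne (hip.trans hpz).ne')
        rwa [pivotCycle_apply_of_ne (hip.trans hpz).ne' hpz.ne' hqz.ne']
  · rintro ⟨-, apply_lt_of_le, apply_lt_of_gt⟩
    refine ⟨⟨hip, hpq.lt, ?_, ?_⟩, fun x hxp hfx ↦ ?_, fun z hpz hfz ↦ ?_⟩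
    · simpa [apply_i, apply_p] using apply_lt_of_gt q hpq.lt
    · simpa [apply_p, apply_q] using apply_lt_of_le p le_rfl hip.ne'
    · by_contra hxi
      rw [comp_apply, comp_apply, apply_p,
        pivotCycle_apply_of_ne hxi hxp.ne (hxp.trans hpq.lt).ne] at hfx
      exact hfx.asymm (apply_lt_of_le x hxp.le hxi)
    · by_contra hzq
      rw [comp_apply, comp_apply, apply_p,
        pivotCycle_apply_of_ne (hip.trans hpz).ne' hpz.ne' hzq] at hfz
      exact hfz.asymm (apply_lt_of_gt z hpz)

lemma avoids123On_comp_pivotCycle_insert_Iio (h : IsSkewMin f i p) (hpq : p ⋖ q) :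
    Avoids123On (f ∘ pivotCycle i p q) (insert q (Iio p)) ↔ Avoids123On f (Iio q) := by
  -- Up to the order isomorphism `swap p q` of the two blocks, both words agree except at `i`, where
  -- both have their least letter.
  have swap_eq_self : EqOn (swap p q) id (Iio p) := fun x hx ↦
    swap_apply_of_ne_of_ne hx.ne (hx.trans hpq.lt).ne
  have image_eq : swap p q '' Iio q = insert q (Iio p) := by
    rw [hpq.Iio_eq, ← Iio_insert, image_insert_eq, swap_apply_left, swap_eq_self.image_eq_self]
  have apply_eq : ∀ x < q, x ≠ i → (f ∘ pivotCycle i p q) (swap p q x) = f x := fun x hxq hxi ↦ by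
    simp [pivotCycle, swap_apply_of_ne_of_ne hxi hxq.ne]
  have apply_i : (f ∘ pivotCycle i p q) (swap p q i) = f q := by simp [pivotCycle]
  have lt_of_lt : ∀ x < q, x ≠ i → f i < f x := fun x hxq ↦ h.apply_lt_of_le x (hpq.le_of_lt hxq)
  have fqi : f q < f i := h.apply_lt_of_gt q hpq.lt
  rw [← image_eq]
  refine avoids123On_image_iff ?_ fun x hx y hy ↦ ?_
  · rw [hpq.Iio_eq]
    intro x (hxp : x ≤ p) y (hyp : y ≤ p) hxy
    rw [swap_eq_self (hxy.trans_le hyp)]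
    rcases hyp.eq_or_lt with rfl | hyp
    · rw [swap_apply_left]
      exact hxy.trans hpq.lt
    · rwa [swap_eq_self hyp]
  · rcases eq_or_ne x i with hxi | hxi <;> rcases eq_or_ne y i with hyi | hyi
    · simp only [hxi, hyi, lt_self_iff_false]
    · rw [hxi, apply_i, apply_eq y hy hyi]
      exact iff_of_true (fqi.trans (lt_of_lt y hy hyi)) (lt_of_lt y hy hyi)
    · rw [hyi, apply_i, apply_eq x hx hxi]
      exact iff_of_false (fqi.trans (lt_of_lt x hx hxi)).asymm (lt_of_lt x hx hxi).asymm
    · rw [apply_eq x hx hxi, apply_eq y hy hyi]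

lemma avoids123On_comp_pivotCycle_insert_Ioi (hip : i < p) (hpq : p < q) :
    Avoids123On (f ∘ pivotCycle i p q) (insert i (Ioi q)) ↔ Avoids123On f (Ici q) := by
  have hiq : i < q := hip.trans hpq
  have swap_eq_self : EqOn (swap i q) id (Ioi q) := fun x hx ↦
    swap_apply_of_ne_of_ne (hiq.trans hx).ne' hx.ne'
  have image_eq : swap i q '' Ici q = insert i (Ioi q) := by
    rw [← Ioi_insert, image_insert_eq, swap_apply_right, swap_eq_self.image_eq_self]
  have apply_eq : ∀ x ∈ Ici q, (f ∘ pivotCycle i p q) (swap i q x) = f x := by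
    intro x (hx : q ≤ x)
    rcases hx.eq_or_lt with rfl | hx
    · simp [pivotCycle_apply_left hip.ne hiq.ne]
    · rw [swap_eq_self hx, comp_apply, id, pivotCycle_apply_of_ne (hiq.trans hx).ne'
        (hpq.trans hx).ne' hx.ne']
  rw [← image_eq]
  refine avoids123On_image_iff ?_ fun x hx y hy ↦ by rw [apply_eq x hx, apply_eq y hy]
  intro x (hx : q ≤ x) y _ hxy
  rw [swap_eq_self (hx.trans_lt hxy)]
  rcases hx.eq_or_lt with rfl | hx
  · rw [swap_apply_right]
    exact hiq.trans hxy
  · rwa [swap_eq_self hx]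

theorem isUniqueOcc123_comp_pivotCycle_iff (hf : Injective f) (hip : i < p) (hpq : p ⋖ q) :
    IsUniqueOcc123 (f ∘ pivotCycle i p q) i p q ↔
      IsSkewMin f i p ∧ Avoids123On f (Iio q) ∧ Avoids123On f (Ici q) := by
  rw [isUniqueOcc123_iff_of_covBy hpq, isPivot_comp_pivotCycle hf hip hpq,
    avoids123On_comp_pivotCycle_insert_Ioi hip hpq.lt]
  exact and_congr_right fun h ↦
    and_congr_left fun _ ↦ avoids123On_comp_pivotCycle_insert_Iio h hpq

end PivotCycle

section SkewSum

variable {m n : ℕ}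

/-- The skew sum `σ ⊖ ρ`: first the word of `σ` with all values raised by `n`, then the word
of `ρ`. -/
def skewSum (σ : Perm (Fin m)) (ρ : Perm (Fin n)) : Perm (Fin (m + n)) :=
  (finSumFinEquiv.permCongr (Perm.sumCongr σ ρ)).trans
    (finAddFlip.trans (finCongr (Nat.add_comm n m)))

lemma val_skewSum_castAdd (σ : Perm (Fin m)) (ρ : Perm (Fin n)) (x : Fin m) :
    (skewSum σ ρ (Fin.castAdd n x) : ℕ) = n + σ x := by
  simp [skewSum, Nat.add_comm]

lemma val_skewSum_natAdd (σ : Perm (Fin m)) (ρ : Perm (Fin n)) (y : Fin n) :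
    (skewSum σ ρ (Fin.natAdd m y) : ℕ) = ρ y := by
  simp [skewSum]

lemma skewSum_natAdd_lt_castAdd (σ : Perm (Fin m)) (ρ : Perm (Fin n)) (x : Fin m) (y : Fin n) :
    skewSum σ ρ (Fin.natAdd m y) < skewSum σ ρ (Fin.castAdd n x) := by
  rw [Fin.lt_def, val_skewSum_castAdd, val_skewSum_natAdd]
  omega

lemma skewSum_injective2 : Injective2 (skewSum (m := m) (n := n)) := by
  intro σ σ' ρ ρ' h
  constructor <;> ext x
  · have := val_skewSum_castAdd σ ρ x
    rw [h, val_skewSum_castAdd] at this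
    omega
  · rw [← val_skewSum_natAdd σ ρ x, h, val_skewSum_natAdd]

lemma exists_skewSum_eq (τ : Perm (Fin (m + n))) (hτ : ∀ x : Fin m, n ≤ τ (Fin.castAdd n x)) :
    ∃ σ ρ, skewSum σ ρ = τ := by
  set flip : Fin (m + n) ≃ Fin (m + n) := finAddFlip.trans (finCongr (Nat.add_comm n m))
  set e : Perm (Fin m ⊕ Fin n) := finSumFinEquiv.symm.permCongr (τ.trans flip.symm) with he
  have mapsTo : MapsTo e (range Sum.inl) (range Sum.inl) := by
    rintro _ ⟨x, rfl⟩
    rcases hy : e (Sum.inl x) with y | y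
    · exact ⟨y, rfl⟩
    · have hxy : τ (Fin.castAdd n x) = flip (Fin.natAdd m y) := by
        simpa [e, permCongr_apply, symm_apply_eq] using hy
      have val_eq : (τ (Fin.castAdd n x) : ℕ) = y := by simp [hxy, flip]
      exact absurd (hτ x) (by omega)
  obtain ⟨⟨σ, ρ⟩, hσρ⟩ := Perm.mem_sumCongrHom_range_of_perm_mapsTo_inl mapsTo
  refine ⟨σ, ρ, ?_⟩
  rw [Perm.sumCongrHom_apply] at hσρ
  ext x
  simp [skewSum, hσρ, he, flip]

lemma avoids123On_skewSum_range_castAdd (σ : Perm (Fin m)) (ρ : Perm (Fin n)) :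
    Avoids123On (skewSum σ ρ) (range (Fin.castAdd n)) ↔ Avoids123On σ univ := by
  rw [← image_univ]
  refine avoids123On_image_iff ((Fin.strictMono_castAdd n).strictMonoOn _) fun x _ y _ ↦ ?_
  simp only [Fin.lt_def, val_skewSum_castAdd, Nat.add_lt_add_iff_left]

lemma avoids123On_skewSum_range_natAdd (σ : Perm (Fin m)) (ρ : Perm (Fin n)) :
    Avoids123On (skewSum σ ρ) (range (Fin.natAdd m)) ↔ Avoids123On ρ univ := by
  rw [← image_univ]
  refine avoids123On_image_iff ((Fin.strictMono_natAdd m).strictMonoOn _) fun x _ y _ ↦ ?_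
  simp only [Fin.lt_def, val_skewSum_natAdd]

lemma compl_range_castAdd (m n : ℕ) :
    (range (Fin.castAdd n : Fin m → Fin (m + n)))ᶜ = range (Fin.natAdd m) := by
  ext x
  rw [Fin.range_natAdd, mem_compl_iff, mem_ofPred_eq, ← not_lt, not_iff_not]
  exact ⟨fun ⟨y, hy⟩ ↦ hy ▸ y.isLt, fun hx ↦ ⟨⟨x, hx⟩, rfl⟩⟩

lemma avoids123On_skewSum_univ_iff (σ : Perm (Fin m)) (ρ : Perm (Fin n)) :
    Avoids123On (skewSum σ ρ) univ ↔ Avoids123On σ univ ∧ Avoids123On ρ univ := by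
  have isLowerSet_range : IsLowerSet (range (Fin.castAdd n : Fin m → Fin (m + n))) := by
    rintro _ y hy ⟨x, rfl⟩
    exact ⟨⟨y, (Fin.le_def.mp hy).trans_lt x.isLt⟩, rfl⟩
  rw [avoids123On_univ_iff_of_forall_lt isLowerSet_range, compl_range_castAdd,
    avoids123On_skewSum_range_castAdd, avoids123On_skewSum_range_natAdd]
  rintro _ ⟨x, rfl⟩ z hz
  obtain ⟨y, rfl⟩ : z ∈ range (Fin.natAdd m) := compl_range_castAdd m n ▸ hz
  exact skewSum_natAdd_lt_castAdd σ ρ x y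

end SkewSum

section Count

open PowerSeries (coeff catalanSeries)

lemma coeff_succ_catalanSeries_pow_succ (j k : ℕ) :
    coeff (j + 1) (catalanSeries ^ (k + 1)) =
      coeff (j + 1) (catalanSeries ^ k) + coeff j (catalanSeries ^ (k + 2)) := by
  have pow_succ_eq : catalanSeries ^ (k + 1) = catalanSeries ^ k +
      catalanSeries ^ (k + 2) * PowerSeries.X := by
    calc
      _ = catalanSeries ^ k * (catalanSeries ^ 2 * PowerSeries.X + 1) := by
        rw [PowerSeries.catalanSeries_sq_mul_X_add_one, pow_succ]
      _ = _ := by ring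
  rw [pow_succ_eq, map_add, PowerSeries.coeff_succ_mul_X]

variable {n : ℕ}

/-- The permutation whose word is that of `σ` with a new largest value inserted at
position `i`. -/
def insertMax (i : Fin (n + 1)) (σ : Perm (Fin n)) : Perm (Fin (n + 1)) :=
  (finSuccEquiv' i).trans (σ.optionCongr.trans finSuccEquivLast.symm)

lemma insertMax_self (i : Fin (n + 1)) (σ : Perm (Fin n)) : insertMax i σ i = Fin.last n := by
  simp [insertMax]

lemma insertMax_succAbove (i : Fin (n + 1)) (σ : Perm (Fin n)) (x : Fin n) :
    insertMax i σ (i.succAbove x) = (σ x).castSucc := by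
  simp [insertMax]

lemma insertMax_lt_self {i x : Fin (n + 1)} (σ : Perm (Fin n)) (hx : x ≠ i) :
    insertMax i σ x < insertMax i σ i := by
  rw [insertMax_self, Fin.lt_last_iff_ne_last, ← insertMax_self i σ]
  exact (insertMax i σ).injective.ne hx

lemma insertMax_injective2 : Injective2 (insertMax (n := n)) := by
  intro i i' σ σ' h
  obtain rfl : i = i' := (insertMax i σ).injective <| by rw [insertMax_self, h, insertMax_self]
  refine ⟨rfl, Equiv.ext fun x ↦ Fin.castSucc_injective n ?_⟩
  rw [← insertMax_succAbove i, h, insertMax_succAbove]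

lemma exists_insertMax_eq (π : Perm (Fin (n + 1))) : ∃ i σ, insertMax i σ = π := by
  have bijective : Bijective (uncurry (insertMax (n := n))) :=
    (Fintype.bijective_iff_injective_and_card _).mpr
      ⟨insertMax_injective2.uncurry, by simp [Fintype.card_perm, Nat.factorial_succ]⟩
  obtain ⟨⟨i, σ⟩, h⟩ := bijective.surjective π
  exact ⟨i, σ, h⟩

/-- `π` decreases on its first `k` positions (on all of them if `k ≥ n`). -/
def DecreasingPrefix (k : ℕ) (π : Perm (Fin n)) : Prop :=
  StrictAntiOn π {x | (x : ℕ) < k}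

lemma DecreasingPrefix.mono {k l : ℕ} {π : Perm (Fin n)} (hkl : k ≤ l) (h : DecreasingPrefix l π) :
    DecreasingPrefix k π :=
  StrictAntiOn.mono h fun _ hx ↦ hx.trans_le hkl

lemma decreasingPrefix_of_le_one {k : ℕ} (hk : k ≤ 1) (π : Perm (Fin n)) : DecreasingPrefix k π :=
  Subsingleton.strictAntiOn _ fun x (hx : (x : ℕ) < k) y (hy : (y : ℕ) < k) ↦
    Fin.ext (by omega)

lemma strictAntiOn_insertMax_Iio_iff (i : Fin (n + 1)) (σ : Perm (Fin n)) :
    StrictAntiOn (insertMax i σ) (Iio i) ↔ DecreasingPrefix i σ := by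
  have Iio_eq_image : Iio i = i.succAbove '' {x | (x : ℕ) < i} := by
    ext y
    rcases Fin.eq_self_or_eq_succAbove i y with rfl | ⟨x, rfl⟩
    · simp
    · rw [Fin.succAbove_right_injective.mem_set_image, mem_Iio, Fin.succAbove_lt_iff_castSucc_lt]
      rfl
  simp only [Iio_eq_image, StrictAntiOn, forall_mem_image, DecreasingPrefix, insertMax_succAbove,
    Fin.succAbove_lt_succAbove_iff, Fin.castSucc_lt_castSucc_iff]

lemma avoids123On_insertMax_iff (i : Fin (n + 1)) (σ : Perm (Fin n)) :
    Avoids123On (insertMax i σ) univ ↔ Avoids123On σ univ ∧ DecreasingPrefix i σ := by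
  rw [avoids123On_univ_iff_of_strict_max (fun _ ↦ insertMax_lt_self σ) (insertMax i σ).injective,
    strictAntiOn_insertMax_Iio_iff, ← Fin.range_succAbove i, ← image_univ]
  refine and_congr_left fun _ ↦
    avoids123On_image_iff ((Fin.strictMono_succAbove i).strictMonoOn _) fun x _ y _ ↦ ?_
  simp only [insertMax_succAbove, Fin.castSucc_lt_castSucc_iff]

lemma decreasingPrefix_insertMax_zero_iff (k : ℕ) (σ : Perm (Fin n)) :
    DecreasingPrefix (k + 1) (insertMax 0 σ) ↔ DecreasingPrefix k σ := by
  have apply_succ : ∀ x : Fin n, insertMax 0 σ x.succ = (σ x).castSucc := fun x ↦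
    insertMax_succAbove 0 σ x
  simp [DecreasingPrefix, StrictAntiOn, Fin.forall_fin_succ, apply_succ, insertMax_self,
    Fin.castSucc_lt_last]

lemma decreasingPrefix_insertMax_iff_le {k : ℕ} {i : Fin (n + 1)} {σ : Perm (Fin n)}
    (hi : i ≠ 0) (hσ : DecreasingPrefix i σ) :
    DecreasingPrefix (k + 1) (insertMax i σ) ↔ k + 1 ≤ i := by
  refine ⟨fun h ↦ ?_, fun hki ↦ ?_⟩
  · by_contra! hik
    exact (h k.succ_pos hik (Fin.pos_iff_ne_zero.mpr hi)).asymm (insertMax_lt_self σ hi.symm)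
  · refine ((strictAntiOn_insertMax_Iio_iff i σ).mpr hσ).mono fun x (hx : (x : ℕ) < k + 1) ↦ ?_
    exact Fin.lt_def.mpr (hx.trans_le hki)

/-- The 123-avoiding permutations whose first `k` values decrease. Their numbers form the ballot
triangle. -/
def prefixAvoiders (n k : ℕ) : Set (Perm (Fin n)) :=
  {σ | Avoids123On σ univ ∧ DecreasingPrefix k σ}

lemma prefixAvoiders_antitone (n : ℕ) : Antitone (prefixAvoiders n) :=
  fun _ _ hkl _ hσ ↦ ⟨hσ.1, hσ.2.mono hkl⟩

lemma prefixAvoiders_self (n : ℕ) : prefixAvoiders n n = {Fin.revPerm} := by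
  ext σ
  have decreasingPrefix_iff : DecreasingPrefix n σ ↔ StrictAnti σ := by
    simp [DecreasingPrefix, strictAntiOn_univ]
  rw [mem_singleton_iff, prefixAvoiders, mem_ofPred_eq, decreasingPrefix_iff]
  constructor
  · rintro ⟨-, hσ⟩
    refine Equiv.coe_fn_injective ((hσ.range_inj Fin.rev_strictAnti).mp ?_)
    rw [σ.surjective.range_eq, Fin.rev_surjective.range_eq]
  · rintro rfl
    exact ⟨fun x _ y _ z _ h ↦ h.2.2.1.asymm (Fin.rev_strictAnti h.1), Fin.rev_strictAnti⟩

open Classical in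
-- Inserting the largest letter in front lengthens a decreasing prefix by one letter; inserting it
-- at a position `i ≠ 0` into a word that decreases up to `i` cuts the decreasing prefix at `i`.
lemma insertMax_mem_prefixAvoiders_sdiff_iff {k : ℕ} (hk : k < n) (i : Fin (n + 1))
    (σ : Perm (Fin n)) :
    insertMax i σ ∈ prefixAvoiders (n + 1) (k + 1) \ prefixAvoiders (n + 1) (k + 2) ↔
      σ ∈ prefixAvoiders n k ∧
        i = if DecreasingPrefix (k + 1) σ then ⟨k + 1, by omega⟩ else 0 := by
  simp only [prefixAvoiders, mem_sdiff, mem_ofPred_eq, avoids123On_insertMax_iff]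
  rcases eq_or_ne i 0 with rfl | hi
  · have prefix_zero : DecreasingPrefix ((0 : Fin (n + 1)) : ℕ) σ :=
      decreasingPrefix_of_le_one zero_le_one σ
    have zero_eq_ite : (0 = if DecreasingPrefix (k + 1) σ then (⟨k + 1, by omega⟩ : Fin (n + 1))
        else 0) ↔ ¬DecreasingPrefix (k + 1) σ := by
      split_ifs with h <;> simp [h, Fin.ext_iff]
    rw [decreasingPrefix_insertMax_zero_iff, decreasingPrefix_insertMax_zero_iff, zero_eq_ite]
    tauto
  · have eq_ite : (i = if DecreasingPrefix (k + 1) σ then (⟨k + 1, by omega⟩ : Fin (n + 1))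
        else 0) ↔ DecreasingPrefix (k + 1) σ ∧ (i : ℕ) = k + 1 := by
      split_ifs with h <;> simp [h, hi, Fin.ext_iff]
    rw [eq_ite]
    constructor
    · rintro ⟨⟨⟨h_av, h_dec⟩, h_le⟩, h_lt⟩
      rw [decreasingPrefix_insertMax_iff_le hi h_dec] at h_le h_lt
      have h_eq : (i : ℕ) = k + 1 := by
        by_contra h_ne
        exact h_lt ⟨⟨h_av, h_dec⟩, by omega⟩
      rw [h_eq] at h_dec
      exact ⟨⟨h_av, h_dec.mono k.le_succ⟩, h_dec, h_eq⟩
    · rintro ⟨⟨h_av, -⟩, h_dec, h_eq⟩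
      rw [← h_eq] at h_dec
      rw [decreasingPrefix_insertMax_iff_le hi h_dec, decreasingPrefix_insertMax_iff_le hi h_dec]
      exact ⟨⟨⟨h_av, h_dec⟩, h_eq.ge⟩, fun h ↦ by have := h.2; omega⟩

lemma ncard_prefixAvoiders_succ_succ {k : ℕ} (hk : k < n) :
    (prefixAvoiders (n + 1) (k + 1)).ncard =
      (prefixAvoiders n k).ncard + (prefixAvoiders (n + 1) (k + 2)).ncard := by
  classical
  have sdiff_eq_image : prefixAvoiders (n + 1) (k + 1) \ prefixAvoiders (n + 1) (k + 2) =
      (fun σ ↦ insertMax (if DecreasingPrefix (k + 1) σ then ⟨k + 1, by omega⟩ else 0) σ) ''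
        prefixAvoiders n k := by
    ext π
    obtain ⟨i, σ, rfl⟩ := exists_insertMax_eq π
    rw [insertMax_mem_prefixAvoiders_sdiff_iff hk]
    refine ⟨fun ⟨hσ, hi⟩ ↦ ⟨σ, hσ, by rw [hi]⟩, ?_⟩
    rintro ⟨σ', hσ', h⟩
    obtain ⟨rfl, rfl⟩ := insertMax_injective2 h
    exact ⟨hσ', rfl⟩
  rw [← ncard_sdiff_add_ncard_of_subset (prefixAvoiders_antitone (n + 1) (Nat.le_succ (k + 1))),
    sdiff_eq_image, ncard_image_of_injective _ fun σ σ' h ↦ (insertMax_injective2 h).2]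

lemma prefixAvoiders_of_le_one {k : ℕ} (hk : k ≤ 1) :
    prefixAvoiders n k = {σ : Perm (Fin n) | Avoids123On σ univ} := by
  simp only [prefixAvoiders, decreasingPrefix_of_le_one hk, and_true]

theorem ncard_prefixAvoiders (j k : ℕ) :
    (prefixAvoiders (j + k) k).ncard =
      coeff j (catalanSeries ^ (k + 1)) := by
  induction j generalizing k with
  | zero => rw [Nat.zero_add, prefixAvoiders_self]; simp
  | succ j ih =>
    induction k with
    | zero =>
      rw [coeff_succ_catalanSeries_pow_succ, Nat.add_zero, prefixAvoiders_of_le_one zero_le_one,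
        ← prefixAvoiders_of_le_one le_rfl, ih 1]
      simp [PowerSeries.coeff_one]
    | succ k ihk =>
      have index_eq : j + 1 + k + 1 = j + (k + 2) := by omega
      rw [coeff_succ_catalanSeries_pow_succ, ← Nat.add_assoc,
        ncard_prefixAvoiders_succ_succ (by omega), ihk, index_eq, ih]

theorem ncard_avoids123On_univ (n : ℕ) :
    {σ : Perm (Fin n) | Avoids123On σ univ}.ncard = catalan n := by
  simpa [prefixAvoiders_of_le_one] using ncard_prefixAvoiders n 0

end Count

section NonzeroLast

lemma ncard_avoids123On_univ_apply_last_eq_zero (m : ℕ) :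
    {σ : Perm (Fin (m + 1)) | Avoids123On σ univ ∧ σ (Fin.last m) = 0}.ncard = catalan m := by
  have eq_image : {σ : Perm (Fin (m + 1)) | Avoids123On σ univ ∧ σ (Fin.last m) = 0} =
      (fun σ ↦ skewSum σ (1 : Perm (Fin 1))) '' {σ : Perm (Fin m) | Avoids123On σ univ} := by
    have avoids_one : Avoids123On (1 : Perm (Fin 1)) univ := fun x _ y _ _ _ h ↦
      h.1.ne (Subsingleton.elim x y)
    ext τ
    constructor
    · rintro ⟨h_av, h_last⟩
      obtain ⟨σ, ρ, rfl⟩ := exists_skewSum_eq τ fun x ↦ by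
        rw [Nat.one_le_iff_ne_zero, ← Fin.val_zero (m + 1), Fin.val_ne_iff, ← h_last]
        exact τ.injective.ne (Fin.castSucc_ne_last x)
      rw [Subsingleton.elim ρ 1] at h_av ⊢
      exact ⟨σ, ((avoids123On_skewSum_univ_iff σ 1).mp h_av).1, rfl⟩
    · rintro ⟨σ, hσ, rfl⟩
      exact ⟨(avoids123On_skewSum_univ_iff σ 1).mpr ⟨hσ, avoids_one⟩,
        Fin.ext (val_skewSum_natAdd σ 1 0)⟩
  rw [eq_image, ncard_image_of_injective _ fun σ σ' h ↦ (skewSum_injective2 h).1,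
    ncard_avoids123On_univ]

lemma ncard_avoids123On_univ_apply_last_ne_zero (m : ℕ) :
    {σ : Perm (Fin (m + 1)) | Avoids123On σ univ ∧ σ (Fin.last m) ≠ 0}.ncard =
      catalan (m + 1) - catalan m := by
  rw [← ncard_avoids123On_univ, ← ncard_avoids123On_univ_apply_last_eq_zero, ← ncard_sdiff]
  · congr 1
    ext σ
    simp only [mem_ofPred_eq, mem_sdiff, ne_eq, not_and, and_congr_right_iff]
    tauto
  · exact fun σ hσ ↦ hσ.1

end NonzeroLast

section Weave

lemma IsSkewMin.val_add_val_add_one {n : ℕ} {τ : Perm (Fin n)} {i p : Fin n}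
    (h : IsSkewMin τ i p) : (p + τ i + 1 : ℕ) = n := by
  have map_eq : (Finset.Ioi p).map τ.toEmbedding = Finset.Iio (τ i) := by
    ext y
    obtain ⟨z, rfl⟩ := τ.surjective y
    simp [h.apply_lt_iff]
  have card_eq := congrArg Finset.card map_eq
  rw [Finset.card_map, Fin.card_Ioi, Fin.card_Iio] at card_eq
  omega

/-- The last position of the left block of a word split into blocks of lengths `m + 1` and
`k + 1`. -/
abbrev leftLast (m k : ℕ) : Fin (m + 1 + (k + 1)) :=
  Fin.castAdd (k + 1) (Fin.last m)

/-- The first position of the right block of a word split into blocks of lengths `m + 1` and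
`k + 1`. -/
abbrev rightFirst (m k : ℕ) : Fin (m + 1 + (k + 1)) :=
  Fin.natAdd (m + 1) 0

variable {m k : ℕ}

lemma leftLast_covBy_rightFirst (m k : ℕ) : leftLast m k ⋖ rightFirst m k := by
  simp [Fin.covBy_iff]

lemma Iio_rightFirst (m k : ℕ) : Iio (rightFirst m k) = range (Fin.castAdd (k + 1)) :=
  Fin.range_castAdd.symm

lemma Ici_rightFirst (m k : ℕ) : Ici (rightFirst m k) = range (Fin.natAdd (m + 1)) :=
  (Fin.range_natAdd_eq_Ici _ _).symm

lemma isSkewMin_skewSum_iff {σ : Perm (Fin (m + 1))} {ρ : Perm (Fin (k + 1))} {x : Fin (m + 1)} :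
    IsSkewMin (skewSum σ ρ) (Fin.castAdd (k + 1) x) (leftLast m k) ↔
      σ x = 0 ∧ x ≠ Fin.last m := by
  constructor
  · intro h
    have val_eq := h.val_add_val_add_one
    rw [val_skewSum_castAdd, Fin.val_castAdd, Fin.val_last] at val_eq
    exact ⟨Fin.ext (by rw [Fin.val_zero]; omega), fun hx ↦ h.lt.ne (congrArg _ hx)⟩
  · rintro ⟨hσx, hx⟩
    refine ⟨(Fin.strictMono_castAdd _).lt_iff_lt.mpr (Fin.lt_last_iff_ne_last.mpr hx),
      fun y hy hyx ↦ ?_, fun z hz ↦ ?_⟩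
    · obtain ⟨y, rfl⟩ : y ∈ range (Fin.castAdd (k + 1)) :=
        Iio_rightFirst m k ▸ hy.trans_lt (leftLast_covBy_rightFirst m k).lt
      have hσy : σ y ≠ 0 := hσx ▸ σ.injective.ne fun h ↦ hyx (congrArg _ h)
      rw [Fin.lt_def, val_skewSum_castAdd, val_skewSum_castAdd, hσx]
      exact Nat.add_lt_add_left (Fin.pos_iff_ne_zero.mpr hσy) _
    · obtain ⟨z, rfl⟩ : z ∈ range (Fin.natAdd (m + 1)) :=
        Ici_rightFirst m k ▸ (leftLast_covBy_rightFirst m k).ge_of_gt hz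
      exact skewSum_natAdd_lt_castAdd σ ρ x z

/-- The word `σ ⊖ ρ` with a 123-occurrence created across the junction of the two blocks, by
rotating the minimum of `σ`, the last letter of `σ` and the first letter of `ρ`. -/
def weave (σ : Perm (Fin (m + 1))) (ρ : Perm (Fin (k + 1))) : Perm (Fin (m + 1 + (k + 1))) :=
  skewSum σ ρ * pivotCycle (Fin.castAdd (k + 1) (σ.symm 0)) (leftLast m k) (rightFirst m k)

lemma isUniqueOcc123_weave {σ : Perm (Fin (m + 1))} {ρ : Perm (Fin (k + 1))}
    (hσ : Avoids123On σ univ) (hσ_last : σ (Fin.last m) ≠ 0) (hρ : Avoids123On ρ univ) :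
    IsUniqueOcc123 (weave σ ρ) (Fin.castAdd (k + 1) (σ.symm 0)) (leftLast m k)
      (rightFirst m k) := by
  have skewMin : IsSkewMin (skewSum σ ρ) (Fin.castAdd (k + 1) (σ.symm 0)) (leftLast m k) :=
    isSkewMin_skewSum_iff.mpr ⟨σ.apply_symm_apply 0, fun h ↦ hσ_last (σ.symm_apply_eq.mp h).symm⟩
  refine (isUniqueOcc123_comp_pivotCycle_iff (skewSum σ ρ).injective skewMin.lt
    (leftLast_covBy_rightFirst m k)).mpr ⟨skewMin, ?_, ?_⟩
  · rwa [Iio_rightFirst, avoids123On_skewSum_range_castAdd]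
  · rwa [Ici_rightFirst, avoids123On_skewSum_range_natAdd]

lemma exists_weave_eq {π : Perm (Fin (m + 1 + (k + 1)))} {i : Fin (m + 1 + (k + 1))}
    (h : IsUniqueOcc123 π i (leftLast m k) (rightFirst m k)) :
    ∃ (σ : Perm (Fin (m + 1))) (ρ : Perm (Fin (k + 1))),
      (Avoids123On σ univ ∧ σ (Fin.last m) ≠ 0) ∧ Avoids123On ρ univ ∧ weave σ ρ = π := by
  have hip : i < leftLast m k := h.1.1
  obtain ⟨x, rfl⟩ : i ∈ range (Fin.castAdd (k + 1)) :=
    Iio_rightFirst m k ▸ hip.trans (leftLast_covBy_rightFirst m k).lt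
  obtain ⟨τ, rfl⟩ : ∃ τ, π = τ * pivotCycle (Fin.castAdd (k + 1) x) (leftLast m k)
    (rightFirst m k) := ⟨_, (inv_mul_cancel_right π _).symm⟩
  rw [Perm.coe_mul, isUniqueOcc123_comp_pivotCycle_iff τ.injective hip
    (leftLast_covBy_rightFirst m k)] at h
  obtain ⟨skewMin, h_left, h_right⟩ := h
  have val_eq := skewMin.val_add_val_add_one
  rw [Fin.val_castAdd, Fin.val_last] at val_eq
  obtain ⟨σ, ρ, rfl⟩ := exists_skewSum_eq τ fun y ↦ by
    have hy : ¬leftLast m k < Fin.castAdd (k + 1) y :=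
      not_lt.mpr ((Fin.strictMono_castAdd _).monotone (Fin.le_last y))
    rw [← skewMin.apply_lt_iff, not_lt, Fin.le_def] at hy
    omega
  rw [Iio_rightFirst, avoids123On_skewSum_range_castAdd] at h_left
  rw [Ici_rightFirst, avoids123On_skewSum_range_natAdd] at h_right
  obtain ⟨hσx, hx⟩ := isSkewMin_skewSum_iff.mp skewMin
  refine ⟨σ, ρ, ⟨h_left, hσx ▸ σ.injective.ne hx.symm⟩, h_right, ?_⟩
  rw [weave, ← hσx, symm_apply_apply]

theorem ncard_exists_isUniqueOcc123 (m k : ℕ) :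
    {π : Perm (Fin (m + 1 + (k + 1))) |
        ∃ i, IsUniqueOcc123 π i (leftLast m k) (rightFirst m k)}.ncard =
      (catalan (m + 1) - catalan m) * catalan (k + 1) := by
  have eq_image : {π : Perm (Fin (m + 1 + (k + 1))) |
        ∃ i, IsUniqueOcc123 π i (leftLast m k) (rightFirst m k)} =
      uncurry weave '' {σ : Perm (Fin (m + 1)) | Avoids123On σ univ ∧ σ (Fin.last m) ≠ 0} ×ˢ
        {ρ : Perm (Fin (k + 1)) | Avoids123On ρ univ} := by
    ext π
    constructor
    · rintro ⟨i, hi⟩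
      obtain ⟨σ, ρ, hσ, hρ, rfl⟩ := exists_weave_eq hi
      exact ⟨(σ, ρ), ⟨hσ, hρ⟩, rfl⟩
    · rintro ⟨⟨σ, ρ⟩, ⟨⟨hσ, hσ_last⟩, hρ⟩, rfl⟩
      exact ⟨_, isUniqueOcc123_weave hσ hσ_last hρ⟩
  rw [eq_image, InjOn.ncard_image, ncard_prod, ncard_avoids123On_univ_apply_last_ne_zero,
    ncard_avoids123On_univ]
  rintro ⟨σ, ρ⟩ ⟨⟨hσ, hσ_last⟩, hρ⟩ ⟨σ', ρ'⟩ ⟨⟨hσ', hσ'_last⟩, hρ'⟩ (h : weave σ ρ = weave σ' ρ')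
  have hi := ((isUniqueOcc123_weave hσ' hσ'_last hρ').2 _ _ _
    (h ▸ (isUniqueOcc123_weave hσ hσ_last hρ).1)).1
  rw [weave, weave, hi, mul_left_inj] at h
  obtain ⟨rfl, rfl⟩ := skewSum_injective2 h
  rfl

end Weave

section Occurrences

variable {n : ℕ} {π : Perm (Fin n)} {i p q : Fin n}

lemma occ123_eq_one_iff_s19 : occ123 π = 1 ↔ ∃ i p q, IsUniqueOcc123 π i p q := by
  simp only [occ123, Finset.card_eq_one, Finset.eq_singleton_iff_unique_mem, Finset.mem_filter_univ,
    Prod.exists, Prod.forall, Prod.mk.injEq, IsUniqueOcc123, IsOcc123]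

lemma IsUniqueOcc123.occ1_23_eq_one_iff (h : IsUniqueOcc123 π i p q) : occ1_23 π = 1 ↔ p ⋖ q := by
  rw [Fin.covBy_iff, Nat.covBy_iff_add_one_eq, occ1_23, Finset.card_eq_one]
  constructor
  · rintro ⟨⟨x, y, z⟩, h_eq⟩
    obtain ⟨hxy, hyz, hz, fxy, fyz⟩ := (Finset.mem_filter_univ _).mp
      (h_eq ▸ Finset.mem_singleton_self (x, y, z))
    obtain ⟨-, rfl, rfl⟩ := h.2 x y z ⟨hxy, hyz, fxy, fyz⟩
    exact hz.symm
  · refine fun hpq ↦ ⟨(i, p, q), ?_⟩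
    ext ⟨x, y, z⟩
    rw [Finset.mem_filter_univ, Finset.mem_singleton]
    constructor
    · rintro ⟨hxy, hyz, -, fxy, fyz⟩
      obtain ⟨rfl, rfl, rfl⟩ := h.2 x y z ⟨hxy, hyz, fxy, fyz⟩
      rfl
    · rintro ⟨⟩
      exact ⟨h.1.1, h.1.2.1, hpq.symm, h.1.2.2⟩

lemma IsUniqueOcc123.val_add_apply_add_one (h : IsUniqueOcc123 π i p q) (hpq : p ⋖ q) :
    (p + π p + 1 : ℕ) = n := by
  obtain ⟨τ, rfl⟩ : ∃ τ, π = τ * pivotCycle i p q := ⟨_, (inv_mul_cancel_right π _).symm⟩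
  rw [Perm.mul_apply, pivotCycle_apply_middle]
  exact ((isUniqueOcc123_comp_pivotCycle_iff τ.injective h.1.1 hpq).mp h).1.val_add_val_add_one

lemma single_1_23_and_middle_value_iff {c : ℕ} (hpq : p ⋖ q) (hpc : p + c + 1 = n) :
    (occ1_23 π = 1 ∧ occ123 π = 1 ∧ ∀ i j k : Fin n, i < j → j < k → (k : ℕ) = (j : ℕ) + 1 →
      π i < π j → π j < π k → (π j : ℕ) = c) ↔ ∃ i, IsUniqueOcc123 π i p q := by
  rw [occ123_eq_one_iff_s19]
  constructor
  · rintro ⟨h_vinc, ⟨i, p', q', h⟩, h_middle⟩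
    have hpq' : p' ⋖ q' := h.occ1_23_eq_one_iff.mp h_vinc
    obtain ⟨hip, hlt, fip, fpq⟩ := h.1
    have val_succ : (q' : ℕ) = p' + 1 :=
      (Nat.covBy_iff_add_one_eq.mp (Fin.covBy_iff.mp hpq')).symm
    have apply_eq : (π p' : ℕ) = c := h_middle i p' q' hip hlt val_succ fip fpq
    have val_add := h.val_add_apply_add_one hpq'
    obtain rfl : p' = p := Fin.ext (by omega)
    exact ⟨i, hpq'.unique_right hpq ▸ h⟩
  · rintro ⟨i, h⟩
    refine ⟨h.occ1_23_eq_one_iff.mpr hpq, ⟨i, p, q, h⟩, fun x y z hxy hyz _ fxy fyz ↦ ?_⟩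
    obtain ⟨rfl, rfl, rfl⟩ := h.2 x y z ⟨hxy, hyz, fxy, fyz⟩
    have val_add := h.val_add_apply_add_one hpq
    omega

end Occurrences

/-- The number of permutations of length `n` with exactly one occurrence of
1-23 and exactly one occurrence of 1-2-3 whose unique 1-23 occurrence has
middle value `b` (i.e. `b - 1` as an element of `Fin n`) equals
`(C_(n-b+1) - C_(n-b)) * C_(b-1)`. -/
theorem single_1_23_middle_value_count (n b : ℕ) (hn : 3 ≤ n) (hb : 2 ≤ b) (hb' : b ≤ n - 1) :
    {π : Equiv.Perm (Fin n) | occ1_23 π = 1 ∧ occ123 π = 1 ∧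
        (∀ i j k : Fin n, i < j → j < k → (k : ℕ) = (j : ℕ) + 1 →
          π i < π j → π j < π k → (π j : ℕ) = b - 1)}.ncard
      = (catalan (n - b + 1) - catalan (n - b)) * catalan (b - 1) := by
  obtain ⟨k, rfl⟩ : ∃ k, b = k + 1 + 1 := Nat.exists_eq_add_of_le' hb
  obtain ⟨m, rfl⟩ : ∃ m, n = m + 1 + (k + 1) := ⟨n - (k + 2), by omega⟩
  have left_size : m + 1 + (k + 1) - (k + 1 + 1) = m := by omega
  have pivot_position : (leftLast m k : ℕ) + (k + 1) + 1 = m + 1 + (k + 1) := by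
    rw [Fin.val_castAdd, Fin.val_last]
    omega
  simp only [Nat.add_sub_cancel, left_size,
    single_1_23_and_middle_value_iff (leftLast_covBy_rightFirst m k) pivot_position,
    ncard_exists_isUniqueOcc123]
end
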